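/- Let R > 0 and ε > 0, and let ψ̃ be a smooth subharmonic function on an open neighborhood of the closed disk of radius R centered at 0 in ℂ, satisfying ψ̃ ≤ 1 on the closed disk and ψ̃(0) ≥ 0. Then the mass a := (1/2π) ∫_{B_{e^{−1/2−ε} R}(0)} Δψ̃(ζ) dA(ζ) satisfies a ≤ 2/(1+2ε); in particular a < 2. -/

import Mathlib

open MeasureTheory

/-- The Laplacian `Δf = ∂²f/∂x² + ∂²f/∂y²` of a function `f : ℂ → ℝ`, expressed via
iterated directional (Fréchet) derivatives in the directions `1` and `i`. -/
noncomputable def laplacian (f : ℂ → ℝ) (z : ℂ) : ℝ :=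
  fderiv ℝ (fun w => fderiv ℝ f w 1) z 1 +
    fderiv ℝ (fun w => fderiv ℝ f w Complex.I) z Complex.I

/-!
In polar coordinates, with a radial weight `w` such that `t * w' t` is a constant `k`,
`t * w * Δf` is the divergence of `(t * w * ∂ₜf - k * f, w * ∂_θ f / t)`. Integrating over a
rectangle in `(t, θ)` turns this into a relation between fluxes and circle averages of `f`.

The weight `1` says that the mass of `Δf` on a disk is the flux of `∇f` through its boundary. The
weight `log (R / t)` on the annulus between the radii `r` and `R` bounds, for `Δf ≥ 0`, the flux
through the inner circle times `log (R / r)` by `2π` times the growth of the circle average of `f`,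
which is at most `2π (sup f - f c)` by the sub-mean value property. For `r = exp (-1/2 - ε) R` the
logarithm is `1/2 + ε`.
-/

open Filter Metric Real Set Topology
open scoped Laplacian Real

section Calculus

variable {F : Type*} [NormedAddCommGroup F] [NormedSpace ℝ F]

lemma differentiableAt_fderiv {E : Type*} [NormedAddCommGroup E] [NormedSpace ℝ E] {f : E → F}
    {x : E} (hf : ContDiffAt ℝ 2 f x) :
    DifferentiableAt ℝ (fderiv ℝ f) x :=
  (hf.fderiv_right (m := 1) (by norm_num)).differentiableAt one_ne_zero

variable {φ γ D : ℝ × ℝ → F} {p : ℝ × ℝ} {v : F} {a b a' b' : ℝ}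

lemma fderiv_apply_one_zero_eq (hφ : DifferentiableAt ℝ φ p)
    (hv : HasDerivAt (fun t ↦ φ (t, p.2)) v p.1) : fderiv ℝ φ p (1, 0) = v :=
  (hφ.hasFDerivAt.comp_hasDerivAt p.1
    ((hasDerivAt_id p.1).prodMk (hasDerivAt_const p.1 p.2))).unique hv

lemma fderiv_apply_zero_one_eq (hφ : DifferentiableAt ℝ φ p)
    (hv : HasDerivAt (fun θ ↦ φ (p.1, θ)) v p.2) : fderiv ℝ φ p (0, 1) = v :=
  (hφ.hasFDerivAt.comp_hasDerivAt p.2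
    ((hasDerivAt_const p.2 p.1).prodMk (hasDerivAt_id p.2))).unique hv

theorem integral2_divergence_of_differentiableAt
    (hφ : ∀ p ∈ uIcc a b ×ˢ uIcc a' b', DifferentiableAt ℝ φ p)
    (hγ : ∀ p ∈ uIcc a b ×ˢ uIcc a' b', DifferentiableAt ℝ γ p)
    (hD : ContinuousOn D (uIcc a b ×ˢ uIcc a' b'))
    (hdiv : ∀ p ∈ uIcc a b ×ˢ uIcc a' b', fderiv ℝ φ p (1, 0) + fderiv ℝ γ p (0, 1) = D p) :
    ∫ x in a..b, ∫ y in a'..b', D (x, y) =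
      (((∫ x in a..b, γ (x, b')) - ∫ x in a..b, γ (x, a')) + ∫ y in a'..b', φ (b, y)) -
        ∫ y in a'..b', φ (a, y) := by
  have hint : IntegrableOn (fun p ↦ fderiv ℝ φ p (1, 0) + fderiv ℝ γ p (0, 1))
      (uIcc a b ×ˢ uIcc a' b') :=
    (integrableOn_congr_fun hdiv (measurableSet_uIcc.prod measurableSet_uIcc)).2
      (hD.integrableOn_compact (isCompact_uIcc.prod isCompact_uIcc))
  have hsub := prod_mono (Ioo_subset_Icc_self (a := min a b) (b := max a b))
    (Ioo_subset_Icc_self (a := min a' b') (b := max a' b'))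
  rw [← integral2_divergence_prod_of_hasFDerivAt φ γ (fderiv ℝ φ) (fderiv ℝ γ) a a' b b'
    (fun p hp ↦ (hφ p hp).continuousAt.continuousWithinAt)
    (fun p hp ↦ (hγ p hp).continuousAt.continuousWithinAt)
    (fun p hp ↦ (hφ p (hsub hp)).hasFDerivAt) (fun p hp ↦ (hγ p (hsub hp)).hasFDerivAt) hint]
  exact intervalIntegral.integral_congr fun x hx ↦ intervalIntegral.integral_congr fun y hy ↦
    (hdiv (x, y) ⟨hx, hy⟩).symm

end Calculus

section CircleMap

lemma differentiable_circleMap_prod (c : ℂ) :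
    Differentiable ℝ fun p : ℝ × ℝ ↦ circleMap c p.1 p.2 := by
  unfold circleMap; fun_prop

lemma hasDerivAt_circleMap_radius (c : ℂ) (t θ : ℝ) :
    HasDerivAt (fun t ↦ circleMap c t θ) (circleMap 0 1 θ) t := by
  simpa [circleMap] using ((Complex.ofRealCLM.hasDerivAt (x := t)).mul_const _).const_add c

lemma circleMap_mem_closedBall_diff_ball {c : ℂ} {a b t : ℝ} (ha : 0 ≤ a) (ht : t ∈ Icc a b)
    (θ : ℝ) :
    circleMap c t θ ∈ closedBall c b \ ball c a := by
  simpa [circleMap, abs_of_nonneg (ha.trans ht.1), and_comm] using ht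

end CircleMap

section Polar

variable {F : Type*} [NormedAddCommGroup F] [NormedSpace ℝ F]

theorem setIntegral_ball_zero_eq_polar (g : ℂ → F) (r : ℝ) :
    ∫ z in ball 0 r, g z = ∫ p in Ioo 0 r ×ˢ Ioo (-π) π, p.1 • g (circleMap 0 p.1 p.2) := by
  have hsymm (p : ℝ × ℝ) : Complex.polarCoord.symm p = circleMap 0 p.1 p.2 := by
    rw [Complex.polarCoord_symm_apply, circleMap_zero, Complex.exp_mul_I, Complex.ofReal_cos,
      Complex.ofReal_sin]
  have hpre : polarCoord.target ∩ (fun p ↦ circleMap 0 p.1 p.2) ⁻¹' ball 0 r =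
      Ioo 0 r ×ˢ Ioo (-π) π := by
    ext p
    simp only [polarCoord_target, mem_inter_iff, mem_prod, mem_preimage, mem_ball_zero_iff,
      norm_circleMap_zero, mem_Ioi, mem_Ioo]
    grind [abs_of_pos]
  rw [← integral_indicator measurableSet_ball, ← Complex.integral_comp_polarCoord_symm, ← hpre,
    ← setIntegral_indicator (circleMap.continuous.measurable measurableSet_ball)]
  simp only [hsymm, indicator_smul]
  rfl

variable {g : ℂ → F} {c : ℂ} {r : ℝ}

theorem setIntegral_ball_eq_intervalIntegral (hr : 0 ≤ r) (hg : ContinuousOn g (closedBall c r)) :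
    ∫ z in ball c r, g z = ∫ t in 0..r, ∫ θ in 0..2 * π, t • g (circleMap c t θ) := by
  have hcont : ContinuousOn (fun p : ℝ × ℝ ↦ p.1 • g (circleMap c p.1 p.2))
      (Icc 0 r ×ˢ Icc (-π) π) := by
    refine continuousOn_fst.smul (hg.comp circleMap.continuous.continuousOn fun p hp ↦ ?_)
    simpa [circleMap, abs_of_nonneg hp.1.1] using hp.1.2
  have hint := (hcont.integrableOn_compact (μ := volume)
    (isCompact_Icc.prod isCompact_Icc)).mono_set (prod_mono Ioo_subset_Icc_self Ioo_subset_Icc_self)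
  have hpi : -π ≤ π := by linarith [pi_pos]
  calc ∫ z in ball c r, g z = ∫ z in ball 0 r, g (c + z) := by
        rw [← (measurePreserving_add_left volume c).setIntegral_preimage_emb
          (measurableEmbedding_addLeft c), preimage_add_left_ball, neg_add_cancel]
    _ = ∫ p in Ioo 0 r ×ˢ Ioo (-π) π, p.1 • g (circleMap c p.1 p.2) := by
        simp only [setIntegral_ball_zero_eq_polar, circleMap, zero_add]
    _ = ∫ t in 0..r, ∫ θ in -π..π, t • g (circleMap c t θ) := by
        rw [Measure.volume_eq_prod, setIntegral_prod _ hint]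
        simp only [intervalIntegral.integral_of_le, hr, hpi, integral_Ioc_eq_integral_Ioo]
    _ = ∫ t in 0..r, ∫ θ in 0..2 * π, t • g (circleMap c t θ) := by
        refine intervalIntegral.integral_congr fun t _ ↦ ?_
        have hper : Function.Periodic (fun θ ↦ t • g (circleMap c t θ)) (2 * π) := fun θ ↦ by
          simp only [periodic_circleMap c t θ]
        have := hper.intervalIntegral_add_eq (-π) 0
        ring_nf at this ⊢
        exact this

end Polar

section Laplacian

variable {F : Type*} [NormedAddCommGroup F] [NormedSpace ℝ F]

theorem fderiv_fderiv_apply_self_add_apply_mul_I (f : ℂ → F) (z u : ℂ) :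
    fderiv ℝ (fderiv ℝ f) z u u + fderiv ℝ (fderiv ℝ f) z (u * Complex.I) (u * Complex.I) =
      ‖u‖ ^ 2 • (Δ f) z := by
  obtain ⟨x, y⟩ := u
  have hu : (⟨x, y⟩ : ℂ) = x • 1 + y • Complex.I := by apply Complex.ext <;> simp
  have huI : (⟨x, y⟩ : ℂ) * Complex.I = (-y) • 1 + x • Complex.I := by
    apply Complex.ext <;> simp
  rw [huI, InnerProductSpace.laplacian_eq_iteratedFDeriv_complexPlane,
    Complex.sq_norm, Complex.normSq_mk, hu]
  simp only [iteratedFDeriv_two_apply, map_add, map_smul, add_apply, smul_apply,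
    Matrix.cons_val_zero, Matrix.cons_val_one]
  module

lemma continuousAt_laplacian {f : ℂ → F} {z : ℂ} (hf : ContDiffAt ℝ 2 f z) :
    ContinuousAt (Δ f) z := by
  have hD2 : ContinuousAt (fderiv ℝ (fderiv ℝ f)) z :=
    (hf.fderiv_right (m := 1) (by norm_num)).continuousAt_fderiv one_ne_zero
  simp only [InnerProductSpace.laplacian_eq_iteratedFDeriv_complexPlane, iteratedFDeriv_two_apply]
  fun_prop

lemma laplacian_eq_innerProductSpace_laplacian {f : ℂ → ℝ} {z : ℂ} (hf : ContDiffAt ℝ 2 f z) :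
    laplacian f z = (Δ f) z := by
  simp [InnerProductSpace.laplacian_eq_iteratedFDeriv_complexPlane, iteratedFDeriv_two_apply,
    laplacian, fderiv_clm_apply (differentiableAt_fderiv hf)]

end Laplacian

section Green

variable {F : Type*} [NormedAddCommGroup F] [NormedSpace ℝ F] {f : ℂ → F} {c : ℂ}
  {w w' : ℝ → ℝ} {k a b r t θ : ℝ} {p : ℝ × ℝ}

/-- The outward normal derivative of `f` at the point of angle `θ` on the circle of radius `t` about
`c`. The unit normal is taken to be `circleMap 0 1 θ`, which points inwards when `t < 0`. -/
noncomputable def normalDeriv (f : ℂ → F) (c : ℂ) (t θ : ℝ) : F :=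
  fderiv ℝ f (circleMap c t θ) (circleMap 0 1 θ)

/-- The derivative of `f` along the unit tangent vector at the point of angle `θ` on the circle of
radius `t` about `c`, i.e. `t⁻¹ ∂_θ f` when `t ≠ 0`. -/
noncomputable def tangentDeriv (f : ℂ → F) (c : ℂ) (t θ : ℝ) : F :=
  fderiv ℝ f (circleMap c t θ) (circleMap 0 1 θ * Complex.I)

/-- The outward flux of the gradient of `f` through the circle of radius `r` about `c`, with the arc
length element written as `r dθ`. -/
noncomputable def circleFlux (f : ℂ → F) (c : ℂ) (r : ℝ) : F :=
  r • ∫ θ in 0..2 * π, normalDeriv f c r θ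

lemma circleFlux_zero (f : ℂ → F) (c : ℂ) : circleFlux f c 0 = 0 := zero_smul ℝ _

lemma hasDerivAt_comp_circleMap_radius (hf : DifferentiableAt ℝ f (circleMap c t θ)) :
    HasDerivAt (fun t ↦ f (circleMap c t θ)) (normalDeriv f c t θ) t :=
  hf.hasFDerivAt.comp_hasDerivAt t (hasDerivAt_circleMap_radius c t θ)

lemma hasDerivAt_normalDeriv (hf : ContDiffAt ℝ 2 f (circleMap c t θ)) :
    HasDerivAt (fun t ↦ normalDeriv f c t θ)
      (fderiv ℝ (fderiv ℝ f) (circleMap c t θ) (circleMap 0 1 θ) (circleMap 0 1 θ)) t := by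
  have hDf := (differentiableAt_fderiv hf).hasFDerivAt.comp_hasDerivAt t
    (hasDerivAt_circleMap_radius c t θ)
  simpa [normalDeriv] using hDf.clm_apply (hasDerivAt_const t (circleMap 0 1 θ))

lemma hasDerivAt_tangentDeriv (hf : ContDiffAt ℝ 2 f (circleMap c t θ)) :
    HasDerivAt (fun θ ↦ tangentDeriv f c t θ)
      (t • fderiv ℝ (fderiv ℝ f) (circleMap c t θ) (circleMap 0 1 θ * Complex.I)
        (circleMap 0 1 θ * Complex.I) - normalDeriv f c t θ) θ := by
  have hDf := (differentiableAt_fderiv hf).hasFDerivAt.comp_hasDerivAt θ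
    (hasDerivAt_circleMap c t θ)
  have hscale : circleMap 0 t θ * Complex.I = t • (circleMap 0 1 θ * Complex.I) := by
    simp [circleMap, mul_assoc]
  have hII : circleMap 0 1 θ * Complex.I * Complex.I = -circleMap 0 1 θ := by
    rw [mul_assoc, Complex.I_mul_I, mul_neg_one]
  refine (hDf.clm_apply ((hasDerivAt_circleMap 0 1 θ).mul_const Complex.I)).congr_deriv ?_
  rw [hscale, hII, map_smul, map_neg, ← sub_eq_add_neg]
  rfl

lemma differentiableAt_normalDeriv {p : ℝ × ℝ} (hf : ContDiffAt ℝ 2 f (circleMap c p.1 p.2)) :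
    DifferentiableAt ℝ (fun p : ℝ × ℝ ↦ normalDeriv f c p.1 p.2) p :=
  ((differentiableAt_fderiv hf).comp p (differentiable_circleMap_prod c p)).clm_apply
    ((differentiable_circleMap 0 1 p.2).comp p differentiableAt_snd)

lemma differentiableAt_tangentDeriv {p : ℝ × ℝ} (hf : ContDiffAt ℝ 2 f (circleMap c p.1 p.2)) :
    DifferentiableAt ℝ (fun p : ℝ × ℝ ↦ tangentDeriv f c p.1 p.2) p :=
  ((differentiableAt_fderiv hf).comp p (differentiable_circleMap_prod c p)).clm_apply
    (((differentiable_circleMap 0 1 p.2).comp p differentiableAt_snd).mul_const _)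

/-- The radial component `t w ∂ₜf - k f` at `p = (t, θ)` of the field on the `(t, θ)`-plane whose
divergence is `t w Δf` when `t w'(t) = k`. -/
noncomputable def greenRadial (f : ℂ → F) (c : ℂ) (w : ℝ → ℝ) (k : ℝ) (p : ℝ × ℝ) : F :=
  (p.1 * w p.1) • normalDeriv f c p.1 p.2 - k • f (circleMap c p.1 p.2)

/-- The angular component `t⁻¹ w ∂_θ f` at `p = (t, θ)` of the field on the `(t, θ)`-plane whose
divergence is `t w Δf` when `t w'(t) = k`. -/
noncomputable def greenAngular (f : ℂ → F) (c : ℂ) (w : ℝ → ℝ) (p : ℝ × ℝ) : F :=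
  w p.1 • tangentDeriv f c p.1 p.2

lemma differentiableAt_greenRadial (hw : DifferentiableAt ℝ w p.1)
    (hf : ContDiffAt ℝ 2 f (circleMap c p.1 p.2)) :
    DifferentiableAt ℝ (greenRadial f c w k) p :=
  ((differentiableAt_fst.mul (hw.comp p differentiableAt_fst)).smul
    (differentiableAt_normalDeriv hf)).sub
    (((hf.differentiableAt two_ne_zero).comp p (differentiable_circleMap_prod c p)).const_smul k)

lemma differentiableAt_greenAngular (hw : DifferentiableAt ℝ w p.1)
    (hf : ContDiffAt ℝ 2 f (circleMap c p.1 p.2)) :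
    DifferentiableAt ℝ (greenAngular f c w) p :=
  (hw.comp p differentiableAt_fst).smul (differentiableAt_tangentDeriv hf)

lemma fderiv_greenRadial_add_fderiv_greenAngular {v : ℝ} (hw : HasDerivAt w v p.1)
    (hf : ContDiffAt ℝ 2 f (circleMap c p.1 p.2)) :
    fderiv ℝ (greenRadial f c w (p.1 * v)) p (1, 0) + fderiv ℝ (greenAngular f c w) p (0, 1) =
      (p.1 * w p.1) • (Δ f) (circleMap c p.1 p.2) := by
  rw [fderiv_apply_one_zero_eq (differentiableAt_greenRadial hw.differentiableAt hf)
      ((((hasDerivAt_id p.1).mul hw).smul (hasDerivAt_normalDeriv hf)).sub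
        ((hasDerivAt_comp_circleMap_radius (hf.differentiableAt two_ne_zero)).const_smul _)),
    fderiv_apply_zero_one_eq (differentiableAt_greenAngular hw.differentiableAt hf)
      ((hasDerivAt_tangentDeriv hf).const_smul (w p.1))]
  have hΔ := fderiv_fderiv_apply_self_add_apply_mul_I f (circleMap c p.1 p.2) (circleMap 0 1 p.2)
  rw [norm_circleMap_zero, abs_one, one_pow, one_smul] at hΔ
  rw [← hΔ]
  simp only [Pi.mul_apply, id]
  module

lemma integral_greenRadial (hf : ∀ z ∈ sphere c |r|, ContDiffAt ℝ 2 f z) :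
    ∫ θ in 0..2 * π, greenRadial f c w k (r, θ) =
      w r • circleFlux f c r - (2 * π * k) • circleAverage f c r := by
  have hmem (θ : ℝ) := hf _ (circleMap_mem_sphere' c r θ)
  have hN : Continuous fun θ ↦ (r * w r) • normalDeriv f c r θ :=
    continuous_iff_continuousAt.2 fun θ ↦
      ((differentiableAt_normalDeriv (p := (r, θ)) (hmem θ)).continuousAt.comp
        (f := fun θ ↦ (r, θ)) (by fun_prop)).const_smul _
  have hfc : Continuous fun θ ↦ k • f (circleMap c r θ) := continuous_iff_continuousAt.2 fun θ ↦
    ((hmem θ).continuousAt.comp (continuous_circleMap c r).continuousAt).const_smul k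
  have h2π : 2 * π * k * (2 * π)⁻¹ = k := by field_simp
  simp only [greenRadial, circleFlux, circleAverage_def]
  rw [intervalIntegral.integral_sub (hN.intervalIntegrable _ _) (hfc.intervalIntegrable _ _),
    intervalIntegral.integral_smul, intervalIntegral.integral_smul, smul_smul, smul_smul, h2π,
    mul_comm]

theorem integral_smul_laplacian_annulus (ha : 0 ≤ a) (hab : a ≤ b)
    (hw : ∀ t ∈ Icc a b, HasDerivAt w (w' t) t) (hk : ∀ t ∈ Icc a b, t * w' t = k)
    (hf : ∀ z ∈ closedBall c b \ ball c a, ContDiffAt ℝ 2 f z) :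
    ∫ t in a..b, ∫ θ in 0..2 * π, (t * w t) • (Δ f) (circleMap c t θ) =
      (w b • circleFlux f c b - (2 * π * k) • circleAverage f c b) -
        (w a • circleFlux f c a - (2 * π * k) • circleAverage f c a) := by
  have hIcc {p : ℝ × ℝ} (hp : p ∈ uIcc a b ×ˢ uIcc 0 (2 * π)) : p.1 ∈ Icc a b :=
    uIcc_of_le hab ▸ hp.1
  have hmem {p : ℝ × ℝ} (hp : p ∈ uIcc a b ×ˢ uIcc 0 (2 * π)) :=
    hf _ (circleMap_mem_closedBall_diff_ball ha (hIcc hp) p.2)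
  have hper (t : ℝ) : greenAngular f c w (t, 2 * π) = greenAngular f c w (t, 0) := by
    simp [greenAngular, tangentDeriv, circleMap]
  have hcont : ContinuousOn (fun p : ℝ × ℝ ↦ (p.1 * w p.1) • (Δ f) (circleMap c p.1 p.2))
      (uIcc a b ×ˢ uIcc 0 (2 * π)) := fun p hp ↦
    ((continuousAt_fst.mul ((hw p.1 (hIcc hp)).continuousAt.comp continuousAt_fst)).smul
      ((continuousAt_laplacian (hmem hp)).comp (f := fun p : ℝ × ℝ ↦ circleMap c p.1 p.2)
        circleMap.continuous.continuousAt)).continuousWithinAt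
  refine (integral2_divergence_of_differentiableAt
    (fun p hp ↦ differentiableAt_greenRadial (hw _ (hIcc hp)).differentiableAt (hmem hp))
    (fun p hp ↦ differentiableAt_greenAngular (hw _ (hIcc hp)).differentiableAt (hmem hp))
    hcont fun p hp ↦ hk _ (hIcc hp) ▸
      fderiv_greenRadial_add_fderiv_greenAngular (hw _ (hIcc hp)) (hmem hp)).trans ?_
  simp only [hper, sub_self, zero_add]
  rw [integral_greenRadial, integral_greenRadial]
  · rw [abs_of_nonneg ha]
    exact fun z hz ↦ hf z ⟨(mem_sphere.1 hz).trans_le hab, by simp [mem_sphere.1 hz]⟩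
  · rw [abs_of_nonneg (ha.trans hab)]
    exact fun z hz ↦ hf z ⟨(mem_sphere.1 hz).le, by simpa [mem_sphere.1 hz] using hab⟩

theorem setIntegral_laplacian_eq_circleFlux (hr : 0 ≤ r)
    (hf : ∀ z ∈ closedBall c r, ContDiffAt ℝ 2 f z) :
    ∫ z in ball c r, (Δ f) z = circleFlux f c r := by
  have hΔ : ContinuousOn (Δ f) (closedBall c r) :=
    fun z hz ↦ (continuousAt_laplacian (hf z hz)).continuousWithinAt
  have hgreen := integral_smul_laplacian_annulus (w := 1) (w' := 0) (k := 0) le_rfl hr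
    (fun t _ ↦ hasDerivAt_const t 1) (fun t _ ↦ mul_zero t) (fun z hz ↦ hf z hz.1)
  simpa [circleFlux_zero, setIntegral_ball_eq_intervalIntegral hr hΔ] using hgreen

end Green

section Subharmonic

variable {f : ℂ → ℝ} {c : ℂ} {r R M : ℝ}

theorem circleFlux_mul_log_le_circleAverage_sub (hr : 0 < r) (hrR : r ≤ R)
    (hf : ∀ z ∈ closedBall c R \ ball c r, ContDiffAt ℝ 2 f z)
    (hΔ : ∀ z ∈ closedBall c R \ ball c r, 0 ≤ (Δ f) z) :
    circleFlux f c r * log (R / r) ≤ 2 * π * (circleAverage f c R - circleAverage f c r) := by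
  have hpos {t : ℝ} (ht : t ∈ Icc r R) : 0 < t := hr.trans_le ht.1
  have hgreen := integral_smul_laplacian_annulus (w := fun t ↦ log R - log t) (k := -1) hr.le hrR
    (fun t ht ↦ (hasDerivAt_log (hpos ht).ne').const_sub (log R))
    (fun t ht ↦ by rw [mul_neg, mul_inv_cancel₀ (hpos ht).ne']) hf
  have hnonneg : 0 ≤ ∫ t in r..R, ∫ θ in 0..2 * π,
      (t * (log R - log t)) • (Δ f) (circleMap c t θ) :=
    intervalIntegral.integral_nonneg hrR fun t ht ↦
      intervalIntegral.integral_nonneg two_pi_pos.le fun θ _ ↦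
        smul_nonneg (mul_nonneg (hpos ht).le (sub_nonneg.2 (log_le_log (hpos ht) ht.2)))
          (hΔ _ (circleMap_mem_closedBall_diff_ball hr.le ht θ))
  rw [hgreen, sub_self] at hnonneg
  rw [log_div (hr.trans_le hrR).ne' hr.ne']
  simp only [smul_eq_mul] at hnonneg
  linarith

lemma circleFlux_nonneg_of_laplacian_nonneg (hr : 0 ≤ r)
    (hf : ∀ z ∈ closedBall c r, ContDiffAt ℝ 2 f z) (hΔ : ∀ z ∈ closedBall c r, 0 ≤ (Δ f) z) :
    0 ≤ circleFlux f c r :=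
  setIntegral_laplacian_eq_circleFlux hr hf ▸
    setIntegral_nonneg measurableSet_ball fun z hz ↦ hΔ z (ball_subset_closedBall hz)

lemma circleAverage_le_circleAverage_of_laplacian_nonneg (hr : 0 < r) (hrR : r ≤ R)
    (hf : ∀ z ∈ closedBall c R, ContDiffAt ℝ 2 f z) (hΔ : ∀ z ∈ closedBall c R, 0 ≤ (Δ f) z) :
    circleAverage f c r ≤ circleAverage f c R := by
  have hsub := closedBall_subset_closedBall (x := c) hrR
  have hflux : 0 ≤ circleFlux f c r := circleFlux_nonneg_of_laplacian_nonneg hr.le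
    (fun z hz ↦ hf z (hsub hz)) fun z hz ↦ hΔ z (hsub hz)
  have hgrowth := circleFlux_mul_log_le_circleAverage_sub hr hrR
    (fun z hz ↦ hf z hz.1) fun z hz ↦ hΔ z hz.1
  have hlog : 0 ≤ log (R / r) := log_nonneg ((one_le_div hr).2 hrR)
  exact sub_nonneg.1 <|
    nonneg_of_mul_nonneg_right ((mul_nonneg hflux hlog).trans hgrowth) two_pi_pos

theorem le_circleAverage_of_laplacian_nonneg (hR : 0 < R)
    (hf : ∀ z ∈ closedBall c R, ContDiffAt ℝ 2 f z) (hΔ : ∀ z ∈ closedBall c R, 0 ≤ (Δ f) z) :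
    f c ≤ circleAverage f c R := by
  have hcont : ContinuousOn (circleAverage f c) (Icc 0 R) :=
    ContinuousOn.circleAverage (fun z hz ↦
      (hf z (mem_closedBall_iff_norm.2 hz.2)).continuousAt.continuousWithinAt) fun s hs ↦ hs.1
  have hlim : Tendsto (circleAverage f c) (𝓝[Ioc 0 R] 0) (𝓝 (f c)) := by
    simpa using (hcont 0 (left_mem_Icc.2 hR.le)).mono_left (nhdsWithin_mono 0 Ioc_subset_Icc_self)
  have : (𝓝[Ioc 0 R] (0 : ℝ)).NeBot := by
    rw [nhdsWithin_Ioc_eq_nhdsGT hR]; infer_instance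
  exact le_of_tendsto hlim <| eventually_mem_nhdsWithin.mono fun s hs ↦
    circleAverage_le_circleAverage_of_laplacian_nonneg hs.1 hs.2 hf hΔ

theorem setIntegral_laplacian_mul_log_le_circleAverage_sub (hr : 0 < r) (hrR : r ≤ R)
    (hf : ∀ z ∈ closedBall c R, ContDiffAt ℝ 2 f z) (hΔ : ∀ z ∈ closedBall c R, 0 ≤ (Δ f) z) :
    (∫ z in ball c r, (Δ f) z) * log (R / r) ≤ 2 * π * (circleAverage f c R - f c) := by
  have hsub := closedBall_subset_closedBall (x := c) hrR
  calc (∫ z in ball c r, (Δ f) z) * log (R / r) = circleFlux f c r * log (R / r) := by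
        rw [setIntegral_laplacian_eq_circleFlux hr.le fun z hz ↦ hf z (hsub hz)]
    _ ≤ 2 * π * (circleAverage f c R - circleAverage f c r) :=
        circleFlux_mul_log_le_circleAverage_sub hr hrR (fun z hz ↦ hf z hz.1) fun z hz ↦ hΔ z hz.1
    _ ≤ 2 * π * (circleAverage f c R - f c) := by
        gcongr
        exact le_circleAverage_of_laplacian_nonneg hr (fun z hz ↦ hf z (hsub hz))
          fun z hz ↦ hΔ z (hsub hz)

theorem setIntegral_laplacian_mul_log_le_of_le (hr : 0 < r) (hrR : r < R)
    (hf : ContDiffOn ℝ 2 f (ball c R)) (hΔ : ∀ z ∈ ball c R, 0 ≤ (Δ f) z)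
    (hM : ∀ z ∈ ball c R, f z ≤ M) :
    (∫ z in ball c r, (Δ f) z) * log (R / r) ≤ 2 * π * (M - f c) := by
  have hlim : Tendsto (fun ρ ↦ (∫ z in ball c r, (Δ f) z) * log (ρ / r)) (𝓝[<] R)
      (𝓝 ((∫ z in ball c r, (Δ f) z) * log (R / r))) :=
    (((continuousAt_id.div_const r).log (div_pos (hr.trans hrR) hr).ne').const_mul _).mono_left
      nhdsWithin_le_nhds
  refine le_of_tendsto hlim ?_
  filter_upwards [Ioo_mem_nhdsLT hrR] with ρ hρ
  have hsub : closedBall c ρ ⊆ ball c R := closedBall_subset_ball hρ.2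
  have hfρ (z) (hz : z ∈ closedBall c ρ) : ContDiffAt ℝ 2 f z :=
    hf.contDiffAt (isOpen_ball.mem_nhds (hsub hz))
  have hsphere : sphere c |ρ| ⊆ closedBall c ρ := by
    rw [abs_of_pos (hr.trans hρ.1)]; exact sphere_subset_closedBall
  have havg : circleAverage f c ρ ≤ M := circleAverage_mono_on_of_le_circle
    (ContinuousOn.circleIntegrable' fun z hz ↦ (hfρ z (hsphere hz)).continuousAt.continuousWithinAt)
    fun z hz ↦ hM z (hsub (hsphere hz))
  calc (∫ z in ball c r, (Δ f) z) * log (ρ / r) ≤ 2 * π * (circleAverage f c ρ - f c) :=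
        setIntegral_laplacian_mul_log_le_circleAverage_sub hr hρ.1.le hfρ fun z hz ↦ hΔ z (hsub hz)
    _ ≤ 2 * π * (M - f c) := by gcongr

end Subharmonic

theorem stmt_6_general (c : ℂ) (R ε M : ℝ) (hR : 0 < R) (hε : -(1 / 2) < ε) (ψ : ℂ → ℝ)
    (hψ : ContDiffOn ℝ 2 ψ (ball c R)) (hΔ : ∀ z ∈ ball c R, 0 ≤ laplacian ψ z)
    (hM : ∀ z ∈ ball c R, ψ z ≤ M) :
    (1 / (2 * π)) * ∫ ζ in ball c (exp (-(1 / 2) - ε) * R), laplacian ψ ζ ≤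
      2 * (M - ψ c) / (1 + 2 * ε) := by
  have hr : 0 < exp (-(1 / 2) - ε) * R := by positivity
  have hrR : exp (-(1 / 2) - ε) * R < R :=
    mul_lt_of_lt_one_left hR (exp_lt_one_iff.2 (by linarith))
  have heq (z) (hz : z ∈ ball c R) : laplacian ψ z = (Δ ψ) z :=
    laplacian_eq_innerProductSpace_laplacian (hψ.contDiffAt (isOpen_ball.mem_nhds hz))
  have hlog : log (R / (exp (-(1 / 2) - ε) * R)) = (1 + 2 * ε) / 2 := by
    rw [div_mul_cancel_right₀ hR.ne', log_inv, log_exp]; ring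
  have hmass := setIntegral_laplacian_mul_log_le_of_le hr hrR hψ
    (fun z hz ↦ heq z hz ▸ hΔ z hz) hM
  rw [setIntegral_congr_fun measurableSet_ball fun z hz ↦ heq z (ball_subset_ball hrR.le hz),
    le_div_iff₀ (by linarith), one_div, inv_mul_eq_div, div_mul_eq_mul_div,
    div_le_iff₀ two_pi_pos]
  rw [hlog] at hmass
  linarith

/-- If `ψ̃` is smooth subharmonic on an open neighborhood of the closed disk of radius `R > 0`,
with `ψ̃ ≤ 1` on the closed disk and `ψ̃(0) ≥ 0`, and `ε > 0`, then the mass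
`a := (1/2π) ∫_{B_{e^{−1/2−ε} R}(0)} Δψ̃ dA` satisfies `a ≤ 2/(1+2ε)`; in particular `a < 2`. -/
theorem stmt_6 (R ε : ℝ) (hR : 0 < R) (hε : 0 < ε)
    (ψ : ℂ → ℝ) (U : Set ℂ) (hU : IsOpen U)
    (hUR : Metric.closedBall (0 : ℂ) R ⊆ U)
    (hsm : ContDiffOn ℝ (⊤ : ℕ∞) ψ U) (hsh : ∀ z ∈ U, 0 ≤ laplacian ψ z)
    (h1 : ∀ z ∈ Metric.closedBall (0 : ℂ) R, ψ z ≤ 1) (h0 : 0 ≤ ψ 0) :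
    (1 / (2 * Real.pi)) *
        (∫ ζ in Metric.ball (0 : ℂ) (Real.exp (-(1 / 2) - ε) * R), laplacian ψ ζ)
      ≤ 2 / (1 + 2 * ε) ∧
    (1 / (2 * Real.pi)) *
        (∫ ζ in Metric.ball (0 : ℂ) (Real.exp (-(1 / 2) - ε) * R), laplacian ψ ζ)
      < 2 := by
  have hball : ball 0 R ⊆ U := ball_subset_closedBall.trans hUR
  have hmass := (stmt_6_general 0 R ε 1 hR (by linarith) ψ
    (mod_cast (contDiffOn_infty.1 hsm 2).mono hball) (fun z hz ↦ hsh z (hball hz))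
    fun z hz ↦ h1 z (ball_subset_closedBall hz)).trans
    (show _ ≤ 2 / (1 + 2 * ε) by gcongr; linarith)
  exact ⟨hmass, hmass.trans_lt ((div_lt_iff₀ (by linarith)).2 (by linarith))⟩
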